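/- arXiv:2106.02755 — 3 statements merged into one kernel-verified Lean document; each statement's English description precedes it below -/
import Mathlib

section
/- Let V ⊆ ℝ^d, let n ∈ ℕ, let K be a polynomial kernel of degree at most n on ℝ^d, and let M = HF_V(n). Let x₁, …, x_M ∈ V be points such that the evaluation map g ↦ (g(x₁), …, g(x_M)) is a bijection from the space of restrictions to V of polynomials of degree at most n onto ℝ^M. Then the rank of K restricted to V × V equals the rank of the M × M matrix H with entries H_{ij} = K(xᵢ, xⱼ). -/
/-- The linear map sending a real polynomial in the variables `ι` to its restriction
(as a function) to a subset `V` of `ι → ℝ`. -/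
noncomputable def restrictEval {ι : Type} (V : Set (ι → ℝ)) :
    MvPolynomial ι ℝ →ₗ[ℝ] (↥V → ℝ) where
  toFun p := fun x => MvPolynomial.eval (x : ι → ℝ) p
  map_add' p q := by funext x; simp
  map_smul' c p := by funext x; simp [MvPolynomial.smul_eval]

/-- The space of functions `V → ℝ` that are restrictions to `V` of polynomials of
total degree at most `n`. -/
noncomputable def polySpace {ι : Type} (V : Set (ι → ℝ)) (n : ℕ) :
    Submodule ℝ (↥V → ℝ) :=
  (MvPolynomial.restrictTotalDegree ι ℝ n).map (restrictEval V)

/-- The Hilbert function of `V`: the dimension of the space of restrictions to `V`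
of polynomials of total degree at most `n`. -/
noncomputable def HF {ι : Type} (V : Set (ι → ℝ)) (n : ℕ) : ℕ :=
  Module.finrank ℝ ↥(polySpace V n)

/-- Multi-indices in `d` variables of total degree at most `n`. -/
abbrev MIdx (d n : ℕ) := {a : Fin d → Fin (n + 1) // ∑ i, (a i : ℕ) ≤ n}

/-- The polynomial kernel `K(x,y) = Σ_{|α|≤n, |β|≤n} c_{αβ} x^α y^β` of degree at most `n`
determined by the coefficient matrix `c`. -/
noncomputable def polyKer {d n : ℕ} (c : MIdx d n → MIdx d n → ℝ) (x y : Fin d → ℝ) : ℝ :=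
  ∑ a : MIdx d n, ∑ b : MIdx d n,
    c a b * ((∏ i, x i ^ (a.1 i : ℕ)) * ∏ i, y i ^ (b.1 i : ℕ))

/-- The rank of the kernel `K` restricted to `V × V`: the least `r` such that there are
feature maps `φ, ψ : V → ℝ^r` with `K(x,y) = ⟨φ(x), ψ(y)⟩` on `V × V`. -/
noncomputable def rankOn {X : Type*} (V : Set X) (K : X → X → ℝ) : ℕ :=
  sInf {r : ℕ | ∃ φ ψ : ↥V → Fin r → ℝ, ∀ x y : ↥V, K x.1 y.1 = ∑ i, φ x i * ψ y i}

/-!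
If evaluation at a finite family of points `xᵢ` is injective on a function space, then a left
inverse of it is an interpolation matrix `L`, with `f(u) = ∑ᵢ L(u, i) f(xᵢ)` for every `f` in the
space. Both families of sections of the kernel lie in such spaces, so interpolating in each
variable gives `K = L H Mᵀ` with `H = (K(xᵢ, yⱼ))`. As `H` is in turn a submatrix of `K`, the two
factor through `ℝ^r` for exactly the same `r`, and for the finite matrix `H` the least such `r` is
its rank.
-/

section Factorization

variable {X Y ι κ R : Type*}

/-- The kernel `K` has rank at most `r`: it is of the form `K(x, y) = ⟨φ(x), ψ(y)⟩` with
`φ : X → R^r` and `ψ : Y → R^r`. Kernels are encoded as matrices with possibly infinite index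
types, and the feature maps are the rows of `A` and `B`. -/
def HasRankAtMost [CommSemiring R] (K : Matrix X Y R) (r : ℕ) : Prop :=
  ∃ (A : Matrix X (Fin r) R) (B : Matrix Y (Fin r) R), K = A * B.transpose

theorem HasRankAtMost.submatrix [CommSemiring R] {K : Matrix X Y R} {r : ℕ}
    (hK : HasRankAtMost K r) (x : ι → X) (y : κ → Y) : HasRankAtMost (K.submatrix x y) r := by
  obtain ⟨A, B, rfl⟩ := hK
  exact ⟨A.submatrix x id, B.submatrix y id, rfl⟩

theorem HasRankAtMost.mul_mul_transpose [CommSemiring R] [Fintype ι] [Fintype κ]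
    {H : Matrix ι κ R} {r : ℕ} (hH : HasRankAtMost H r) (L : Matrix X ι R) (M : Matrix Y κ R) :
    HasRankAtMost (L * H * M.transpose) r := by
  obtain ⟨A, B, rfl⟩ := hH
  exact ⟨L * A, M * B, by simp only [Matrix.transpose_mul, Matrix.mul_assoc]⟩

theorem HasRankAtMost.rank_le [CommSemiring R] [StrongRankCondition R] [Fintype κ]
    {H : Matrix ι κ R} {r : ℕ} (hH : HasRankAtMost H r) : H.rank ≤ r := by
  obtain ⟨A, B, rfl⟩ := hH
  calc (A * B.transpose).rank
      ≤ A.rank := Matrix.rank_mul_le_left A B.transpose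
    _ ≤ Fintype.card (Fin r) := A.rank_le_card_width
    _ = r := Fintype.card_fin r

theorem hasRankAtMost_rank [Field R] [Fintype κ] (H : Matrix ι κ R) :
    HasRankAtMost H H.rank := by
  classical
  let e : LinearMap.range H.mulVecLin ≃ₗ[R] (Fin H.rank → R) :=
    (Module.finBasisOfFinrankEq R _ rfl).equivFun
  let A := LinearMap.toMatrix' ((LinearMap.range H.mulVecLin).subtype ∘ₗ e.symm.toLinearMap)
  let B := LinearMap.toMatrix' (e.toLinearMap ∘ₗ H.mulVecLin.rangeRestrict)
  refine ⟨A, B.transpose, ?_⟩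
  have hcomp : ((LinearMap.range H.mulVecLin).subtype ∘ₗ e.symm.toLinearMap) ∘ₗ
      (e.toLinearMap ∘ₗ H.mulVecLin.rangeRestrict) = H.mulVecLin := by
    ext; simp
  rw [Matrix.transpose_transpose, ← LinearMap.toMatrix'_comp, hcomp, ← Matrix.toLin'_apply',
    LinearMap.toMatrix'_toLin']

theorem isLeast_hasRankAtMost_rank [Field R] [Fintype κ] (H : Matrix ι κ R) :
    IsLeast {r | HasRankAtMost H r} H.rank :=
  ⟨hasRankAtMost_rank H, fun _ => HasRankAtMost.rank_le⟩

end Factorization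

section Interpolation

variable {X Y ι κ 𝕜 : Type*} [Field 𝕜]

theorem exists_interpolation_matrix [Fintype ι] (W : Submodule 𝕜 (X → 𝕜)) {x : ι → X}
    (hx : Function.Injective fun (f : W) i => (f : X → 𝕜) (x i)) :
    ∃ L : Matrix X ι 𝕜, ∀ f ∈ W, f = L.mulVec (f ∘ x) := by
  classical
  let evalAt : W →ₗ[𝕜] (ι → 𝕜) := LinearMap.funLeft 𝕜 𝕜 x ∘ₗ W.subtype
  obtain ⟨G, hG⟩ := evalAt.exists_leftInverse_of_injective (LinearMap.ker_eq_bot.mpr hx)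
  refine ⟨LinearMap.toMatrix' (W.subtype ∘ₗ G), fun f hf => ?_⟩
  have hGf : G (f ∘ x) = ⟨f, hf⟩ := LinearMap.congr_fun hG ⟨f, hf⟩
  rw [LinearMap.toMatrix'_mulVec, LinearMap.comp_apply, hGf, Submodule.subtype_apply]

theorem exists_eq_mul_submatrix_mul_transpose [Fintype ι] [Fintype κ] {K : Matrix X Y 𝕜}
    {W : Submodule 𝕜 (X → 𝕜)} {Z : Submodule 𝕜 (Y → 𝕜)}
    (hW : ∀ v, (fun u => K u v) ∈ W) (hZ : ∀ u, K u ∈ Z) {x : ι → X} {y : κ → Y}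
    (hx : Function.Injective fun (f : W) i => (f : X → 𝕜) (x i))
    (hy : Function.Injective fun (g : Z) j => (g : Y → 𝕜) (y j)) :
    ∃ (L : Matrix X ι 𝕜) (M : Matrix Y κ 𝕜), K = L * K.submatrix x y * M.transpose := by
  obtain ⟨L, hL⟩ := exists_interpolation_matrix W hx
  obtain ⟨M, hM⟩ := exists_interpolation_matrix Z hy
  have hleft : K = L * K.submatrix x id := by
    ext u v
    exact congrFun (hL _ (hW v)) u
  have hright : K = K.submatrix id y * M.transpose := by
    ext u v
    exact (congrFun (hM _ (hZ u)) v).trans (dotProduct_comm _ _)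
  have hrow : K.submatrix x id = K.submatrix x y * M.transpose :=
    congrArg (Matrix.submatrix · x id) hright
  exact ⟨L, M, by rw [Matrix.mul_assoc, ← hrow, ← hleft]⟩

theorem hasRankAtMost_submatrix_iff [Finite ι] [Finite κ] {K : Matrix X Y 𝕜}
    {W : Submodule 𝕜 (X → 𝕜)} {Z : Submodule 𝕜 (Y → 𝕜)}
    (hW : ∀ v, (fun u => K u v) ∈ W) (hZ : ∀ u, K u ∈ Z) {x : ι → X} {y : κ → Y}
    (hx : Function.Injective fun (f : W) i => (f : X → 𝕜) (x i))
    (hy : Function.Injective fun (g : Z) j => (g : Y → 𝕜) (y j)) {r : ℕ} :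
    HasRankAtMost (K.submatrix x y) r ↔ HasRankAtMost K r := by
  cases nonempty_fintype ι
  cases nonempty_fintype κ
  obtain ⟨L, M, hK⟩ := exists_eq_mul_submatrix_mul_transpose hW hZ hx hy
  exact ⟨fun h => hK ▸ h.mul_mul_transpose L M, fun h => h.submatrix x y⟩

end Interpolation

theorem rankOn_eq_sInf_hasRankAtMost {X : Type*} (V : Set X) (K : X → X → ℝ) :
    rankOn V K = sInf {r | HasRankAtMost (Matrix.of fun u v : V => K u v) r} := by
  simp only [rankOn, HasRankAtMost, ← Matrix.ext_iff, Matrix.mul_apply, Matrix.of_apply,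
    Matrix.transpose_apply]
  rfl

theorem rankOn_eq_rank_of_injective_eval {X ι κ : Type*} [Finite ι] [Fintype κ]
    {V : Set X} {K : X → X → ℝ} {W Z : Submodule ℝ (V → ℝ)}
    (hW : ∀ v : V, (fun u : V => K u v) ∈ W) (hZ : ∀ u : V, (fun v : V => K u v) ∈ Z)
    {x : ι → V} {y : κ → V}
    (hx : Function.Injective fun (f : W) i => (f : V → ℝ) (x i))
    (hy : Function.Injective fun (g : Z) j => (g : V → ℝ) (y j)) :
    rankOn V K = (Matrix.of fun i j => K (x i) (y j)).rank := by
  rw [rankOn_eq_sInf_hasRankAtMost]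
  simp only [← hasRankAtMost_submatrix_iff (K := Matrix.of fun u v : V => K u v) hW hZ hx hy]
  exact (isLeast_hasRankAtMost_rank _).csInf_eq

section PolynomialKernel

theorem prod_pow_mem_polySpace {ι : Type} [Fintype ι] (V : Set (ι → ℝ)) {n : ℕ} {a : ι → ℕ}
    (ha : ∑ i, a i ≤ n) : (fun v : V => ∏ i, v.1 i ^ a i) ∈ polySpace V n := by
  refine ⟨∏ i, MvPolynomial.X i ^ a i, ?_, ?_⟩
  · rw [SetLike.mem_coe, MvPolynomial.mem_restrictTotalDegree]
    calc (∏ i, (MvPolynomial.X i : MvPolynomial ι ℝ) ^ a i).totalDegree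
        ≤ ∑ i, (MvPolynomial.X i ^ a i : MvPolynomial ι ℝ).totalDegree :=
          MvPolynomial.totalDegree_finsetProd _ _
      _ = ∑ i, a i := by simp only [MvPolynomial.totalDegree_X_pow]
      _ ≤ n := ha
  · funext v
    simp [restrictEval]

variable {d n : ℕ} (c : MIdx d n → MIdx d n → ℝ)

theorem polyKer_swap (u v : Fin d → ℝ) : polyKer (fun a b => c b a) v u = polyKer c u v := by
  unfold polyKer
  rw [Finset.sum_comm]
  simp only [mul_comm (∏ i, v i ^ _)]

theorem polyKer_left_mem_polySpace (V : Set (Fin d → ℝ)) (y : Fin d → ℝ) :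
    (fun v : V => polyKer c v y) ∈ polySpace V n := by
  have hsection : (fun v : V => polyKer c v y) = ∑ a : MIdx d n,
      (∑ b : MIdx d n, c a b * ∏ i, y i ^ (b.1 i : ℕ)) •
        fun v : V => ∏ i, v.1 i ^ (a.1 i : ℕ) := by
    funext v
    simp only [polyKer, Finset.sum_apply, Pi.smul_apply, smul_eq_mul, Finset.sum_mul,
      mul_assoc, mul_comm (∏ i, y i ^ _)]
  rw [hsection]
  exact Submodule.sum_mem _ fun a _ => Submodule.smul_mem _ _ (prod_pow_mem_polySpace V a.2)

theorem polyKer_right_mem_polySpace (V : Set (Fin d → ℝ)) (y : Fin d → ℝ) :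
    (fun v : V => polyKer c y v) ∈ polySpace V n := by
  simpa only [polyKer_swap] using polyKer_left_mem_polySpace (fun a b => c b a) V y

end PolynomialKernel

theorem stmt_5_general {d n : ℕ} {V : Set (Fin d → ℝ)} (c : MIdx d n → MIdx d n → ℝ)
    {ι κ : Type*} [Finite ι] [Fintype κ] {x : ι → V} {y : κ → V}
    (hx : Function.Injective fun (g : polySpace V n) i => (g : V → ℝ) (x i))
    (hy : Function.Injective fun (g : polySpace V n) j => (g : V → ℝ) (y j)) :
    rankOn V (polyKer c) = (Matrix.of fun i j => polyKer c (x i) (y j)).rank :=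
  rankOn_eq_rank_of_injective_eval (fun v => polyKer_left_mem_polySpace c V v)
    (fun u => polyKer_right_mem_polySpace c V u) hx hy

/-- **Exact rank formula for polynomial kernels over a set.** If `x₁, …, x_M ∈ V`
(`M = HF_V(n)`) are points for which evaluation is a bijection from the space of
restrictions of degree-`≤ n` polynomials onto `ℝ^M`, then the rank of the polynomial
kernel `K` restricted to `V × V` equals the rank of the matrix `(K(xᵢ, xⱼ))ᵢⱼ`. -/
theorem stmt_5 (d n : ℕ) (V : Set (Fin d → ℝ)) (c : MIdx d n → MIdx d n → ℝ)
    (hsym : ∀ a b, c a b = c b a)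
    (x : Fin (HF V n) → ↥V)
    (hx : Function.Bijective
      (fun (g : ↥(polySpace V n)) (j : Fin (HF V n)) => (g : ↥V → ℝ) (x j))) :
    rankOn V (polyKer c) =
      (Matrix.of fun i j : Fin (HF V n) => polyKer c (x i).1 (x j).1).rank :=
  stmt_5_general c hx.injective hx.injective
end

section
/- Let m₁, m₂ ≥ 1 and n ∈ ℕ, and let V = {x yᵀ : x ∈ ℝ^{m₁}, y ∈ ℝ^{m₂}} be the set of m₁ × m₂ real matrices of rank at most one, regarded as a subset of ℝ^{m₁×m₂} (coordinates given by the m₁m₂ matrix entries). Then HF_V(n) = Σ_{k=0}^{n} C(k + m₁ − 1, m₁ − 1)·C(k + m₂ − 1, m₂ − 1), where C(·,·) denotes the binomial coefficient. -/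
/-! A set with a polynomial parametrization `φ` has, as Hilbert function, the dimension of the space
of the polynomials `p ∘ φ` with `deg p ≤ n`. When every coordinate of `φ` is a monomial, this space
is spanned by monomials, so the dimension is the number of exponent vectors that occur. For
`φ (x, y) = x yᵀ` these are the pairs `(a, b)` of exponent vectors with `|a| = |b| ≤ n`: a monomial
in the matrix entries has its row and column marginals of the same total, and conversely two
multisets of the same size can be zipped into a multiset of pairs. Counting by `k = |a| = |b|` gives
the formula. -/

open MvPolynomial

section MonomialSubstitution

variable {ι σ R : Type*} [CommSemiring R]

lemma aeval_monomial_one_monomial (d : ι → σ →₀ ℕ) (c : ι →₀ ℕ) (r : R) :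
    aeval (fun i => monomial (d i) (1 : R)) (monomial c r) =
      monomial (Finsupp.linearCombination ℕ d c) r := by
  simp only [aeval_monomial, monomial_pow, one_pow, Finsupp.linearCombination_apply,
    monomial_finsupp_sum_index, algebraMap_eq]

lemma map_aeval_monomial_restrictSupport (d : ι → σ →₀ ℕ) (s : Set (ι →₀ ℕ)) :
    (restrictSupport R s).map (aeval fun i => monomial (d i) (1 : R)).toLinearMap =
      restrictSupport R (Finsupp.linearCombination ℕ d '' s) := by
  simp only [restrictSupport_eq_span, Submodule.map_span, Set.image_image,
    AlgHom.toLinearMap_apply, aeval_monomial_one_monomial]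

lemma finrank_restrictSupport [StrongRankCondition R] (s : Set (σ →₀ ℕ)) :
    Module.finrank R (restrictSupport R s) = s.ncard :=
  Module.finrank_eq_nat_card_basis (basisRestrictSupport R s)

end MonomialSubstitution

section Parametrization

variable {ι : Type} {σ : Type*}

lemma HF_range_eval (f : ι → MvPolynomial σ ℝ) (n : ℕ) :
    HF (Set.range fun (z : σ → ℝ) i => eval z (f i)) n =
      Module.finrank ℝ ((restrictTotalDegree ι ℝ n).map (aeval f).toLinearMap) := by
  let φ : (σ → ℝ) → ι → ℝ := fun z i => eval z (f i)
  let pullback := LinearMap.funLeft ℝ ℝ (Set.rangeFactorization φ)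
  let evalFun : MvPolynomial σ ℝ →ₗ[ℝ] (σ → ℝ) → ℝ :=
    LinearMap.pi fun z => (aeval z).toLinearMap
  have pullback_injective : Function.Injective pullback :=
    LinearMap.funLeft_injective_of_surjective ℝ ℝ _ Set.rangeFactorization_surjective
  have evalFun_injective : Function.Injective evalFun :=
    fun p q h => MvPolynomial.funext fun z => congrFun h z
  have comm : pullback ∘ₗ restrictEval (Set.range φ) = evalFun ∘ₗ (aeval f).toLinearMap := by
    refine LinearMap.ext fun p => _root_.funext fun z => ?_
    exact (comp_aeval_apply f (aeval z) p).symm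
  rw [HF, polySpace, (Submodule.equivMapOfInjective pullback pullback_injective _).finrank_eq,
    (Submodule.equivMapOfInjective evalFun evalFun_injective _).finrank_eq,
    ← Submodule.map_comp, comm, Submodule.map_comp]

lemma HF_range_monomial (d : ι → σ →₀ ℕ) (n : ℕ) :
    HF (Set.range fun (z : σ → ℝ) i => (d i).prod fun j e => z j ^ e) n =
      (Finsupp.linearCombination ℕ d '' {c | c.degree ≤ n}).ncard := by
  calc
    _ = HF (Set.range fun (z : σ → ℝ) i => eval z (monomial (d i) 1)) n := by
      simp only [eval_monomial, one_mul]
    _ = _ := by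
      rw [HF_range_eval, restrictTotalDegree, map_aeval_monomial_restrictSupport,
        finrank_restrictSupport]
      rfl

end Parametrization

section Segre

variable {α β : Type*}

/-- The exponent vector of the monomial `xᵢ yⱼ` in the variables `x` (left summand) and `y` (right
summand), which parametrizes the entry `q = (i, j)` of the rank-one matrix `x yᵀ`. -/
noncomputable def segreExponent (q : α × β) : α ⊕ β →₀ ℕ :=
  Finsupp.single (.inl q.1) 1 + Finsupp.single (.inr q.2) 1

lemma linearCombination_segreExponent (c : α × β →₀ ℕ) :
    Finsupp.linearCombination ℕ segreExponent c =
      (c.mapDomain Prod.fst).sumElim (c.mapDomain Prod.snd) := by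
  induction c using Finsupp.induction_linear with
  | zero => simp
  | add c₁ c₂ h₁ h₂ => simp only [map_add, h₁, h₂, Finsupp.mapDomain_add, Finsupp.sumElim_add]
  | single q k => simp [segreExponent, Finsupp.mapDomain_single]

lemma exists_mapDomain_fst_eq_and_snd_eq {a : α →₀ ℕ} {b : β →₀ ℕ} (h : a.degree = b.degree) :
    ∃ c : α × β →₀ ℕ, c.mapDomain Prod.fst = a ∧ c.mapDomain Prod.snd = b := by
  classical
  obtain ⟨as, coe_as⟩ : ∃ as : List α, (as : Multiset α) = Finsupp.toMultiset a :=
    Quot.exists_rep _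
  obtain ⟨bs, coe_bs⟩ : ∃ bs : List β, (bs : Multiset β) = Finsupp.toMultiset b :=
    Quot.exists_rep _
  have length_eq : as.length = bs.length := by
    rw [← Multiset.coe_card, ← Multiset.coe_card, coe_as, coe_bs, Finsupp.card_toMultiset,
      Finsupp.card_toMultiset]
    exact h
  refine ⟨Multiset.toFinsupp (as.zip bs : Multiset (α × β)), ?_, ?_⟩
  · rw [← Finsupp.toMultiset_toFinsupp a, ← coe_as, ← Finsupp.toMultiset_eq_iff,
      ← Finsupp.toMultiset_map, Multiset.toFinsupp_toMultiset, Multiset.map_coe,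
      List.map_fst_zip length_eq.le]
  · rw [← Finsupp.toMultiset_toFinsupp b, ← coe_bs, ← Finsupp.toMultiset_eq_iff,
      ← Finsupp.toMultiset_map, Multiset.toFinsupp_toMultiset, Multiset.map_coe,
      List.map_snd_zip length_eq.ge]

lemma image_linearCombination_segreExponent (n : ℕ) :
    Finsupp.linearCombination ℕ (segreExponent (α := α) (β := β)) '' {c | c.degree ≤ n} =
      Finsupp.sumFinsuppEquivProdFinsupp.symm ''
        {p : (α →₀ ℕ) × (β →₀ ℕ) | p.1.degree = p.2.degree ∧ p.1.degree ≤ n} := by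
  ext e
  constructor
  · rintro ⟨c, hc, rfl⟩
    refine ⟨(c.mapDomain Prod.fst, c.mapDomain Prod.snd), ?_,
      (linearCombination_segreExponent c).symm⟩
    simpa [Finsupp.degree_mapDomain] using hc
  · rintro ⟨⟨a, b⟩, ⟨hab, han⟩, rfl⟩
    obtain ⟨c, rfl, rfl⟩ := exists_mapDomain_fst_eq_and_snd_eq hab
    refine ⟨c, ?_, linearCombination_segreExponent c⟩
    simpa [Finsupp.degree_mapDomain] using han

lemma ncard_degree_eq_degree_le [Fintype α] [Fintype β] (n : ℕ) :
    {p : (α →₀ ℕ) × (β →₀ ℕ) | p.1.degree = p.2.degree ∧ p.1.degree ≤ n}.ncard =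
      ∑ k ∈ Finset.range (n + 1),
        (Fintype.card α).multichoose k * (Fintype.card β).multichoose k := by
  classical
  let exponents (k : ℕ) : Finset ((α →₀ ℕ) × (β →₀ ℕ)) :=
    Finset.finsuppAntidiag .univ k ×ˢ Finset.finsuppAntidiag .univ k
  have mem_exponents (k : ℕ) (p : (α →₀ ℕ) × (β →₀ ℕ)) :
      p ∈ exponents k ↔ p.1.degree = k ∧ p.2.degree = k := by
    simp [exponents, Finsupp.degree_eq_sum]
  have pairwiseDisjoint : (Finset.range (n + 1) : Set ℕ).PairwiseDisjoint exponents := by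
    intro k _ l _ hkl
    refine Finset.disjoint_left.2 fun p hk hl => hkl ?_
    rw [← ((mem_exponents k p).1 hk).1, ((mem_exponents l p).1 hl).1]
  have coe_biUnion :
      {p : (α →₀ ℕ) × (β →₀ ℕ) | p.1.degree = p.2.degree ∧ p.1.degree ≤ n} =
        (Finset.range (n + 1)).biUnion exponents := by
    ext p
    simp only [Set.mem_ofPred_eq, Finset.mem_coe, Finset.mem_biUnion, Finset.mem_range,
      mem_exponents, Nat.lt_succ_iff]
    constructor
    · rintro ⟨h, hn⟩
      exact ⟨_, hn, rfl, h.symm⟩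
    · rintro ⟨k, hk, rfl, h⟩
      exact ⟨h.symm, hk⟩
  simp only [coe_biUnion, Set.ncard_coe_finset, Finset.card_biUnion pairwiseDisjoint, exponents,
    Finset.card_product, Finset.card_finsuppAntidiag_nat_eq_multichoose, Finset.card_univ]

lemma setOf_rankOne_eq_range {R : Type*} [CommSemiring R] :
    {A : α × β → R | ∃ (x : α → R) (y : β → R), ∀ q : α × β, A q = x q.1 * y q.2} =
      Set.range fun (z : α ⊕ β → R) q => (segreExponent q).prod fun j e => z j ^ e := by
  have prod_segreExponent (z : α ⊕ β → R) (q : α × β) :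
      ((segreExponent q).prod fun j e => z j ^ e) = z (.inl q.1) * z (.inr q.2) := by
    simp [segreExponent, Finsupp.prod_add_index', pow_add]
  ext A
  simp only [prod_segreExponent, Set.mem_range]
  constructor
  · rintro ⟨x, y, h⟩
    exact ⟨Sum.elim x y, _root_.funext fun q => (h q).symm⟩
  · rintro ⟨z, rfl⟩
    exact ⟨z ∘ .inl, z ∘ .inr, fun _ => rfl⟩

end Segre

lemma multichoose_eq_choose_pred {m : ℕ} (hm : 1 ≤ m) (k : ℕ) :
    m.multichoose k = (k + m - 1).choose (m - 1) := by
  rw [Nat.multichoose_eq, add_comm m k]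
  exact Nat.choose_symm_of_eq_add (by omega)

theorem stmt_15_general (α β : Type) [Fintype α] [Fintype β] (n : ℕ) :
    HF {A : α × β → ℝ | ∃ (x : α → ℝ) (y : β → ℝ), ∀ q : α × β, A q = x q.1 * y q.2} n =
      ∑ k ∈ Finset.range (n + 1),
        (Fintype.card α).multichoose k * (Fintype.card β).multichoose k := by
  rw [setOf_rankOne_eq_range, HF_range_monomial, image_linearCombination_segreExponent,
    Set.ncard_image_of_injective _ (Equiv.injective _), ncard_degree_eq_degree_le]

/-- **Hilbert function of the variety of rank-one matrices.** For `m₁, m₂ ≥ 1`, the set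
`V = {x yᵀ : x ∈ ℝ^{m₁}, y ∈ ℝ^{m₂}}` of `m₁ × m₂` matrices of rank at most one, viewed
as a subset of `ℝ^{m₁×m₂}` (coordinates indexed by `Fin m₁ × Fin m₂`), has
`HF_V(n) = Σ_{k=0}^{n} C(k+m₁-1, m₁-1)·C(k+m₂-1, m₂-1)`. -/
theorem stmt_15 (m₁ m₂ n : ℕ) (hm₁ : 1 ≤ m₁) (hm₂ : 1 ≤ m₂) :
    HF {A : Fin m₁ × Fin m₂ → ℝ |
          ∃ (x : Fin m₁ → ℝ) (y : Fin m₂ → ℝ), ∀ q : Fin m₁ × Fin m₂, A q = x q.1 * y q.2}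
        n =
      ∑ k ∈ Finset.range (n + 1),
        Nat.choose (k + m₁ - 1) (m₁ - 1) * Nat.choose (k + m₂ - 1) (m₂ - 1) := by
  simpa only [Fintype.card_fin, multichoose_eq_choose_pred hm₁, multichoose_eq_choose_pred hm₂]
    using stmt_15_general (Fin m₁) (Fin m₂) n
end

section
/- Let n ∈ ℕ and let V = SO(3) = {A ∈ ℝ^{3×3} : AᵀA = I, det A = 1}, regarded as a subset of ℝ^{3×3} ≅ ℝ⁹ (coordinates given by the 9 matrix entries). Then HF_V(n) = (2n+3)(2n+1)(n+1)/3. -/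
/-! Unit quaternions `q` parametrize `SO(3)`, with rotation matrices whose entries are quadratic
forms in `q`. Conversely, `1 = ∑ i, q i ^ 2` and every product `q i * q j` is an affine function of
the entries, because `4 q qᵀ` is the identity plus Davenport's matrix of the rotation. Hence,
pulled back to the sphere `S³`, the polynomials of degree at most `n` on `SO(3)` are exactly the
forms of degree `2 * n` in `q`. A form that vanishes on `S³` is zero, so the Hilbert function counts
the monomials of degree `2 * n` in four variables. -/

open MvPolynomial Module Submodule

section Polynomials

variable {σ R : Type*} [CommRing R]

theorem restrictTotalDegree_eq_span_pow (n : ℕ) :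
    restrictTotalDegree σ R n = span R (insert 1 (Set.range X)) ^ n := by
  apply le_antisymm
  · rw [restrictTotalDegree, restrictSupport_eq_span, span_le]
    rintro _ ⟨d, hd : d.degree ≤ n, rfl⟩
    have one_le : 1 ≤ span R (insert 1 (Set.range (X : σ → MvPolynomial σ R))) :=
      one_le.2 (subset_span (Set.mem_insert _ _))
    refine pow_le_pow_right' one_le hd ?_
    have homogeneous_le : homogeneousSubmodule σ R 1 ≤ span R (insert 1 (Set.range X)) :=
      homogeneousSubmodule_one_eq_span_X.trans_le (span_mono (Set.subset_insert _ _))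
    exact pow_le_pow_left' homogeneous_le _ (monomial_mem_homogeneousSubmodule_pow_degree 1 d)
  · induction n with
    | zero => simp [mem_restrictTotalDegree]
    | succ n ih =>
      rw [pow_succ, mul_le]
      intro p hp q hq
      have hq_deg : span R (insert 1 (Set.range X)) ≤ restrictTotalDegree σ R 1 := by
        nontriviality R
        rw [span_le]
        rintro _ (rfl | ⟨i, rfl⟩) <;> simp [mem_restrictTotalDegree]
      rw [mem_restrictTotalDegree]
      exact (totalDegree_mul _ _).trans (add_le_add
        ((mem_restrictTotalDegree _ _ _).1 (ih hp)) ((mem_restrictTotalDegree _ _ _).1 (hq_deg hq)))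

theorem finrank_homogeneousSubmodule [Nontrivial R] [Fintype σ] (n : ℕ) :
    finrank R (homogeneousSubmodule σ R n) = (Fintype.card σ).multichoose n := by
  classical
  have degree_eq : {d : σ →₀ ℕ | d.degree = n} =
      (Finset.univ.finsuppAntidiag n : Finset (σ →₀ ℕ)) := by
    ext d
    simp [Finsupp.degree_eq_sum]
  rw [homogeneousSubmodule_eq_finsupp_supported,
    (AddMonoidAlgebra.supportedEquivFinsupp _).finrank_eq, degree_eq, finrank_finsupp_self]
  simp [Finset.card_finsuppAntidiag_nat_eq_multichoose]

theorem eval_smul_of_isHomogeneous {p : MvPolynomial σ R} {n : ℕ} (hp : p.IsHomogeneous n)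
    (c : R) (x : σ → R) : eval (c • x) p = c ^ n * eval x p := by
  rw [eval_eq, eval_eq, Finset.mul_sum]
  refine Finset.sum_congr rfl fun d hd ↦ ?_
  have hd_degree : ∑ i ∈ d.support, d i = n := by
    rw [← Finsupp.degree_apply, Finsupp.degree_eq_weight_one]
    exact hp (mem_support_iff.1 hd)
  simp only [Pi.smul_apply, smul_eq_mul, mul_pow, Finset.prod_mul_distrib,
    Finset.prod_pow_eq_pow_sum, hd_degree]
  ring

theorem aeval_apply_eq_eval {S : Type*} (f : σ → S → R) (p : MvPolynomial σ R) (s : S) :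
    aeval f p s = eval (fun i ↦ f i s) p := by
  change (Pi.evalAlgHom R (fun _ ↦ R) s).comp (aeval f) p = _
  rw [comp_aeval]
  rfl

variable {A : Type*} [CommRing A] [Algebra R A]

theorem map_aeval_restrictTotalDegree (f : σ → A) (n : ℕ) :
    (restrictTotalDegree σ R n).map (aeval f).toLinearMap =
      span R (insert 1 (Set.range f)) ^ n := by
  rw [restrictTotalDegree_eq_span_pow, Submodule.map_pow, map_span, Set.image_insert_eq,
    ← Set.range_comp]
  simp [Function.comp_def]

theorem map_aeval_homogeneousSubmodule (f : σ → A) (n : ℕ) :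
    (homogeneousSubmodule σ R n).map (aeval f).toLinearMap = span R (Set.range f) ^ n := by
  rw [← homogeneousSubmodule_one_pow, Submodule.map_pow, homogeneousSubmodule_one_eq_span_X,
    map_span, ← Set.range_comp]
  simp [Function.comp_def]

end Polynomials

theorem HF_range {S : Type*} {ι : Type} (f : ι → S → ℝ) (n : ℕ) :
    HF (Set.range fun s i ↦ f i s) n = finrank ℝ (span ℝ (insert 1 (Set.range f)) ^ n :) := by
  let param (s : S) : Set.range fun s i ↦ f i s := ⟨fun i ↦ f i s, s, rfl⟩
  have pullback_injective : Function.Injective (LinearMap.funLeft ℝ ℝ param) :=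
    LinearMap.funLeft_injective_of_surjective _ _ _ (by rintro ⟨_, s, rfl⟩; exact ⟨s, rfl⟩)
  have pullback_comp_restrictEval :
      LinearMap.funLeft ℝ ℝ param ∘ₗ restrictEval _ = (aeval f).toLinearMap := by
    refine LinearMap.ext fun p ↦ _root_.funext fun s ↦ ?_
    exact (aeval_apply_eq_eval f p s).symm
  rw [HF, (equivMapOfInjective _ pullback_injective _).finrank_eq, polySpace, ← map_comp,
    pullback_comp_restrictEval, map_aeval_restrictTotalDegree]

section Sphere

variable {σ : Type*} [Fintype σ]

/-- The `i`-th coordinate, as a function on the unit sphere of `ℝ^σ`. -/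
def sphereCoord (i : σ) : Metric.sphere (0 : EuclideanSpace ℝ σ) 1 → ℝ := fun q ↦ q.1 i

theorem mem_sphere_iff_sum_sq_eq_one {q : EuclideanSpace ℝ σ} :
    q ∈ Metric.sphere 0 1 ↔ ∑ i, q i ^ 2 = 1 := by
  simp [EuclideanSpace.sphere_zero_eq _ zero_le_one]

theorem sum_sphereCoord_sq : ∑ i : σ, sphereCoord i ^ 2 = 1 := by
  ext q
  rw [Finset.sum_apply]
  exact mem_sphere_iff_sum_sq_eq_one.1 q.2

theorem eq_zero_of_isHomogeneous_of_eval_sphere [Nonempty σ] {p : MvPolynomial σ ℝ} {n : ℕ}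
    (hp : p.IsHomogeneous n) (h : ∀ q ∈ Metric.sphere (0 : EuclideanSpace ℝ σ) 1, eval q p = 0) :
    p = 0 := by
  refine MvPolynomial.funext fun x ↦ ?_
  obtain ⟨c, q, hq, hx⟩ :
      ∃ (c : ℝ) (q : EuclideanSpace ℝ σ), ‖q‖ = 1 ∧ WithLp.toLp 2 x = c • q := by
    rcases eq_or_ne x 0 with rfl | hx
    · classical
      exact ⟨0, EuclideanSpace.single (Classical.arbitrary σ) 1, by simp, by simp⟩
    · have hx : ‖WithLp.toLp 2 x‖ ≠ 0 := by simpa using hx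
      exact ⟨‖WithLp.toLp 2 x‖, ‖WithLp.toLp 2 x‖⁻¹ • WithLp.toLp 2 x, by simp [norm_smul, hx],
        by simp [smul_smul, hx]⟩
  have hx : x = c • q.ofLp := congrArg WithLp.ofLp hx
  rw [hx, eval_smul_of_isHomogeneous hp, h q (by simpa using hq), mul_zero, map_zero]

theorem finrank_span_sphereCoord_pow [Nonempty σ] (n : ℕ) :
    finrank ℝ (span ℝ (Set.range (sphereCoord (σ := σ))) ^ n :) =
      (Fintype.card σ).multichoose n := by
  let restriction := (aeval (sphereCoord (σ := σ)) : MvPolynomial σ ℝ →ₐ[ℝ] _).toLinearMap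
  have restriction_injective :
      Function.Injective (restriction.domRestrict (homogeneousSubmodule σ ℝ n)) := by
    rw [← LinearMap.ker_eq_bot, LinearMap.ker_eq_bot']
    intro p hp
    refine Subtype.ext (eq_zero_of_isHomogeneous_of_eval_sphere p.2 fun q hq ↦ ?_)
    exact (aeval_apply_eq_eval sphereCoord p.1 ⟨q, hq⟩).symm.trans (congrFun hp ⟨q, hq⟩)
  rw [← map_aeval_homogeneousSubmodule, ← LinearMap.range_domRestrict,
    LinearMap.finrank_range_of_inj restriction_injective, finrank_homogeneousSubmodule]

end Sphere

section Rotation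

variable {R : Type*} [CommRing R]

/-- The Euler–Rodrigues matrix of the quaternion `q 0 + q 1 i + q 2 j + q 3 k`: the matrix of
`v ↦ q * v * star q` on imaginary quaternions, which is a rotation if `q` has norm one. -/
def eulerRodrigues (q : Fin 4 → R) : Matrix (Fin 3) (Fin 3) R :=
  !![q 0 ^ 2 + q 1 ^ 2 - q 2 ^ 2 - q 3 ^ 2,
      2 * (q 1 * q 2 - q 0 * q 3), 2 * (q 1 * q 3 + q 0 * q 2);
     2 * (q 1 * q 2 + q 0 * q 3),
      q 0 ^ 2 - q 1 ^ 2 + q 2 ^ 2 - q 3 ^ 2, 2 * (q 2 * q 3 - q 0 * q 1);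
     2 * (q 1 * q 3 - q 0 * q 2), 2 * (q 2 * q 3 + q 0 * q 1),
      q 0 ^ 2 - q 1 ^ 2 - q 2 ^ 2 + q 3 ^ 2]

/-- Davenport's matrix of a `3 × 3` matrix, used to recover a unit quaternion from its rotation:
for `A = eulerRodrigues q` with `q` of norm one it is `4 q qᵀ - 1`. As in `eulerRodrigues`, the
scalar part of a quaternion has index `0`. -/
def davenport (A : Matrix (Fin 3) (Fin 3) R) : Matrix (Fin 4) (Fin 4) R :=
  !![A 0 0 + A 1 1 + A 2 2, A 2 1 - A 1 2, A 0 2 - A 2 0, A 1 0 - A 0 1;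
     A 2 1 - A 1 2, A 0 0 - A 1 1 - A 2 2, A 0 1 + A 1 0, A 0 2 + A 2 0;
     A 0 2 - A 2 0, A 0 1 + A 1 0, A 1 1 - A 0 0 - A 2 2, A 1 2 + A 2 1;
     A 1 0 - A 0 1, A 0 2 + A 2 0, A 1 2 + A 2 1, A 2 2 - A 0 0 - A 1 1]

theorem one_add_davenport_eulerRodrigues {q : Fin 4 → R} (hq : ∑ i, q i ^ 2 = 1) :
    1 + davenport (eulerRodrigues q) = 4 • Matrix.vecMulVec q q := by
  rw [Fin.sum_univ_four] at hq
  simp only [← Matrix.ext_iff, davenport, eulerRodrigues, Matrix.add_apply, Matrix.smul_apply,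
    Matrix.vecMulVec_apply, Matrix.of_apply, Matrix.cons_val', Matrix.cons_val_zero,
    Matrix.cons_val_one, Matrix.cons_val_succ, Matrix.cons_val_fin_one, Matrix.cons_val,
    Matrix.one_apply_eq, Matrix.one_apply_ne, Fin.isValue, Fin.forall_fin_succ,
    Fin.succ_zero_eq_one, Fin.succ_one_eq_two, Fin.succ_ne_zero, Fin.reduceSucc, Fin.reduceEq,
    IsEmpty.forall_iff, Nat.reduceAdd, ne_eq, zero_ne_one, not_false_eq_true, and_true]
  grind

theorem eulerRodrigues_mem_specialOrthogonalGroup {q : Fin 4 → R} (hq : ∑ i, q i ^ 2 = 1) :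
    eulerRodrigues q ∈ Matrix.specialOrthogonalGroup (Fin 3) R := by
  rw [Fin.sum_univ_four] at hq
  rw [Matrix.mem_specialOrthogonalGroup_iff, Matrix.mem_orthogonalGroup_iff']
  constructor
  · simp only [← Matrix.ext_iff, eulerRodrigues, Matrix.mul_apply, Matrix.transpose_apply,
      Matrix.of_apply, Matrix.cons_val', Matrix.cons_val_zero, Matrix.cons_val_one,
      Matrix.cons_val_succ, Matrix.cons_val_fin_one, Matrix.cons_val, Matrix.one_apply_eq,
      Matrix.one_apply_ne, Fin.isValue, Fin.sum_univ_three, Fin.forall_fin_succ,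
      Fin.succ_zero_eq_one, Fin.succ_one_eq_two, Fin.succ_ne_zero, Fin.reduceEq,
      IsEmpty.forall_iff, Nat.reduceAdd, ne_eq, zero_ne_one, not_false_eq_true, and_true]
    grind
  · simp only [Matrix.det_fin_three, eulerRodrigues, Matrix.of_apply, Matrix.cons_val',
      Matrix.cons_val_zero, Matrix.cons_val_one, Matrix.cons_val_fin_one, Matrix.cons_val,
      Fin.isValue]
    grind

open scoped Matrix in
theorem adjugate_eq_transpose_of_mem_specialOrthogonalGroup {n : Type*} [Fintype n] [DecidableEq n]
    {A : Matrix n n R} (hA : A ∈ Matrix.specialOrthogonalGroup n R) : A.adjugate = Aᵀ := by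
  obtain ⟨hA, hdet⟩ := Matrix.mem_specialOrthogonalGroup_iff.1 hA
  rw [Matrix.mem_orthogonalGroup_iff'] at hA
  rw [← one_mul A.adjugate, ← hA, Matrix.mul_assoc, Matrix.mul_adjugate, hdet, one_smul, mul_one]

/-- The matrix has rank at most one, because the columns of `A` are orthonormal and every entry of
`A` is its own cofactor. -/
theorem one_add_davenport_apply_self_mul {A : Matrix (Fin 3) (Fin 3) R}
    (hA : A ∈ Matrix.specialOrthogonalGroup (Fin 3) R) (i j k : Fin 4) :
    (1 + davenport A) k k * (1 + davenport A) i j =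
      (1 + davenport A) k i * (1 + davenport A) k j := by
  have adjugate_eq := adjugate_eq_transpose_of_mem_specialOrthogonalGroup hA
  have cols_orthonormal := (Matrix.mem_orthogonalGroup_iff' _ _).1
    (Matrix.mem_specialOrthogonalGroup_iff.1 hA).1
  clear hA
  rw [Matrix.adjugate_fin_three] at adjugate_eq
  simp only [← Matrix.ext_iff, Matrix.mul_apply, Matrix.transpose_apply, Matrix.of_apply,
    Matrix.cons_val', Matrix.cons_val_zero, Matrix.cons_val_succ, Matrix.cons_val_fin_one,
    Matrix.one_apply_eq, Matrix.one_apply_ne, Fin.isValue, Fin.sum_univ_three,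
    Fin.forall_fin_succ, Fin.succ_zero_eq_one, Fin.succ_one_eq_two, Fin.succ_ne_zero,
    Fin.reduceEq, IsEmpty.forall_iff, Nat.reduceAdd, ne_eq, zero_ne_one, not_false_eq_true,
    and_true] at cols_orthonormal adjugate_eq
  revert i j k
  simp only [davenport, Matrix.add_apply, Matrix.of_apply, Matrix.cons_val', Matrix.cons_val_zero,
    Matrix.cons_val_succ, Matrix.cons_val_fin_one, Matrix.one_apply_eq, Matrix.one_apply_ne,
    Fin.isValue, Fin.forall_fin_succ, Fin.succ_zero_eq_one, Fin.succ_one_eq_two,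
    Fin.succ_ne_zero, Fin.reduceSucc, Fin.reduceEq, IsEmpty.forall_iff, ne_eq, zero_ne_one,
    one_ne_zero, not_false_eq_true, and_true]
  grind

theorem exists_eq_vecMulVec_self {n : Type*} [Fintype n] {M : Matrix n n ℝ}
    (hM : ∀ i j k, M k k * M i j = M k i * M k j) (htrace : 0 < M.trace) :
    ∃ v : n → ℝ, M = Matrix.vecMulVec v v := by
  obtain ⟨k, -, hk⟩ : ∃ k ∈ Finset.univ, 0 < M k k :=
    Finset.exists_lt_of_sum_lt (by simpa [Matrix.trace] using htrace)
  refine ⟨fun i ↦ M k i / √(M k k), Matrix.ext fun i j ↦ ?_⟩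
  rw [Matrix.vecMulVec_apply, div_mul_div_comm, Real.mul_self_sqrt hk.le, ← hM i j k,
    mul_div_cancel_left₀ _ hk.ne']

theorem trace_davenport (A : Matrix (Fin 3) (Fin 3) R) : (davenport A).trace = 0 := by
  simp only [Matrix.trace, davenport, Matrix.diag_apply, Matrix.of_apply, Matrix.cons_val',
    Matrix.cons_val_zero, Matrix.cons_val_one, Matrix.cons_val_fin_one, Matrix.cons_val,
    Fin.isValue, Fin.sum_univ_four]
  ring

theorem davenport_injective [IsDomain R] [NeZero (2 : R)] :
    Function.Injective (davenport : Matrix (Fin 3) (Fin 3) R → _) := by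
  intro A B h
  simp only [davenport, EmbeddingLike.apply_eq_iff_eq, Matrix.vecCons_inj, and_true] at h
  have two_mul_eq (i j : Fin 3) : 2 * A i j = 2 * B i j := by
    revert i j
    simp only [Fin.forall_fin_succ, Fin.succ_zero_eq_one, Fin.succ_one_eq_two,
      IsEmpty.forall_iff, and_true]
    grind
  exact Matrix.ext fun i j ↦ mul_left_cancel₀ two_ne_zero (two_mul_eq i j)

theorem exists_eulerRodrigues_eq {A : Matrix (Fin 3) (Fin 3) ℝ}
    (hA : A ∈ Matrix.specialOrthogonalGroup (Fin 3) ℝ) :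
    ∃ q : Fin 4 → ℝ, ∑ i, q i ^ 2 = 1 ∧ eulerRodrigues q = A := by
  have trace_eq : (1 + davenport A).trace = 4 := by simp [Matrix.trace_add, trace_davenport]
  obtain ⟨v, hv⟩ :=
    exists_eq_vecMulVec_self (one_add_davenport_apply_self_mul hA) (trace_eq ▸ four_pos)
  have sum_sq : ∑ i, v i ^ 2 = 4 := by
    rw [← trace_eq, hv, Matrix.trace_vecMulVec]
    simp only [dotProduct, pow_two]
  have sum_half_sq : ∑ i, (v i / 2) ^ 2 = 1 := by
    simp only [div_pow, ← Finset.sum_div, sum_sq]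
    norm_num
  refine ⟨fun i ↦ v i / 2, sum_half_sq, davenport_injective (add_left_cancel (a := 1) ?_)⟩
  rw [one_add_davenport_eulerRodrigues sum_half_sq, hv]
  ext i j
  simp only [Matrix.smul_apply, Matrix.vecMulVec_apply, nsmul_eq_mul]
  ring

theorem eulerRodrigues_apply_mem {S : Type*} [SetLike S R] [AddSubgroupClass S R] {W : S}
    {q : Fin 4 → R} (hq : ∀ i j, q i * q j ∈ W) (i j : Fin 3) : eulerRodrigues q i j ∈ W := by
  fin_cases i <;> fin_cases j <;> simp only [eulerRodrigues, pow_two, two_mul] <;>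
    apply_rules [add_mem, sub_mem]

theorem davenport_apply_mem {S : Type*} [SetLike S R] [AddSubgroupClass S R] {W : S}
    {A : Matrix (Fin 3) (Fin 3) R} (hA : ∀ i j, A i j ∈ W) (i j : Fin 4) :
    davenport A i j ∈ W := by
  fin_cases i <;> fin_cases j <;> apply_rules [add_mem, sub_mem]

variable {K : Type*} [Field K] [NeZero (2 : K)] [Algebra K R]

theorem span_insert_one_eulerRodrigues {q : Fin 4 → R} (hq : ∑ i, q i ^ 2 = 1) :
    span K (insert 1 (Set.range fun p : Fin 3 × Fin 3 ↦ eulerRodrigues q p.1 p.2)) =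
      span K (Set.range q) ^ 2 := by
  apply le_antisymm
  · have mul_mem_sq (i j) : q i * q j ∈ span K (Set.range q) ^ 2 := by
      rw [pow_two]
      exact mul_mem_mul (subset_span ⟨i, rfl⟩) (subset_span ⟨j, rfl⟩)
    rw [span_le]
    rintro _ (rfl | ⟨⟨i, j⟩, rfl⟩)
    · rw [← hq]
      exact sum_mem fun i _ ↦ pow_two (q i) ▸ mul_mem_sq i i
    · exact eulerRodrigues_apply_mem mul_mem_sq i j
  · set W := span K (insert 1 (Set.range fun p : Fin 3 × Fin 3 ↦ eulerRodrigues q p.1 p.2))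
    have one_entry_mem (i j : Fin 4) : (1 : Matrix _ _ R) i j ∈ W := by
      rw [Matrix.one_apply]
      split_ifs
      exacts [subset_span (Set.mem_insert _ _), zero_mem W]
    have davenport_mem := davenport_apply_mem (W := W) (A := eulerRodrigues q)
      fun i j ↦ subset_span (Set.mem_insert_of_mem _ ⟨(i, j), rfl⟩)
    rw [pow_two, span_mul_span, span_le]
    rintro _ ⟨_, ⟨i, rfl⟩, _, ⟨j, rfl⟩, rfl⟩
    have four_smul_mem : (4 : K) • (q i * q j) ∈ W := by
      have add_entry_mem := add_mem (one_entry_mem i j) (davenport_mem i j)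
      rwa [← Matrix.add_apply, one_add_davenport_eulerRodrigues hq, Matrix.smul_apply,
        Matrix.vecMulVec_apply, ← ofNat_smul_eq_nsmul K] at add_entry_mem
    have four_ne_zero : (4 : K) ≠ 0 := by
      rw [← two_add_two_eq_four, ← two_mul]
      exact mul_ne_zero two_ne_zero two_ne_zero
    exact (W.smul_mem_iff four_ne_zero).1 four_smul_mem

theorem eulerRodrigues_apply_apply {S : Type*} (q : Fin 4 → S → R) (i j : Fin 3) (s : S) :
    eulerRodrigues q i j s = eulerRodrigues (fun k ↦ q k s) i j := by
  fin_cases i <;> fin_cases j <;> rfl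

end Rotation

theorem multichoose_four_two_mul (n : ℕ) :
    Nat.multichoose 4 (2 * n) = (2 * n + 3) * (2 * n + 1) * (n + 1) / 3 := by
  have descFactorial_eq :
      (2 * n + 3).descFactorial 3 = 2 * ((2 * n + 3) * (2 * n + 1) * (n + 1)) := by
    simp only [Nat.descFactorial_succ, Nat.descFactorial_zero, Nat.reduceSubDiff]
    ring
  rw [Nat.multichoose_eq, show 4 + 2 * n - 1 = 2 * n + 3 by lia, Nat.choose_symm_add,
    Nat.choose_eq_descFactorial_div_factorial, descFactorial_eq,
    show Nat.factorial 3 = 2 * 3 from rfl, Nat.mul_div_mul_left _ _ two_pos]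

open scoped Matrix in
theorem range_eulerRodrigues_sphereCoord :
    (Set.range fun (q : Metric.sphere (0 : EuclideanSpace ℝ (Fin 4)) 1) (p : Fin 3 × Fin 3) ↦
      eulerRodrigues sphereCoord p.1 p.2 q) =
    {A : Fin 3 × Fin 3 → ℝ |
      (Matrix.of fun i j ↦ A (i, j) : Matrix (Fin 3) (Fin 3) ℝ)ᵀ *
        (Matrix.of fun i j ↦ A (i, j)) = 1 ∧
      (Matrix.of fun i j ↦ A (i, j) : Matrix (Fin 3) (Fin 3) ℝ).det = 1} := by
  simp only [← Matrix.mem_orthogonalGroup_iff', ← Matrix.mem_specialOrthogonalGroup_iff]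
  ext A
  constructor
  · rintro ⟨q, rfl⟩
    simp only [eulerRodrigues_apply_apply]
    exact eulerRodrigues_mem_specialOrthogonalGroup (mem_sphere_iff_sum_sq_eq_one.1 q.2)
  · intro hA
    obtain ⟨q, hq, hqA⟩ := exists_eulerRodrigues_eq hA
    refine ⟨⟨WithLp.toLp 2 q, mem_sphere_iff_sum_sq_eq_one.2 hq⟩, ?_⟩
    ext ⟨i, j⟩
    exact (eulerRodrigues_apply_apply _ _ _ _).trans (congrFun₂ hqA i j)

open Matrix in
/-- **Hilbert function of `SO(3)`.** The special orthogonal group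
`SO(3) = {A ∈ ℝ^{3×3} : AᵀA = I, det A = 1}`, viewed as a subset of `ℝ⁹` (coordinates
indexed by `Fin 3 × Fin 3`), has `HF_V(n) = (2n+3)(2n+1)(n+1)/3`. -/
theorem stmt_17 (n : ℕ) :
    HF {A : Fin 3 × Fin 3 → ℝ |
          (Matrix.of fun i j => A (i, j) : Matrix (Fin 3) (Fin 3) ℝ)ᵀ *
              (Matrix.of fun i j => A (i, j)) = 1 ∧
          (Matrix.of fun i j => A (i, j) : Matrix (Fin 3) (Fin 3) ℝ).det = 1} n =
      (2 * n + 3) * (2 * n + 1) * (n + 1) / 3 := by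
  rw [← range_eulerRodrigues_sphereCoord, HF_range,
    span_insert_one_eulerRodrigues sum_sphereCoord_sq, ← pow_mul, finrank_span_sphereCoord_pow,
    Fintype.card_fin, multichoose_four_two_mul]
end
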